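/- Let P ⊆ ℝⁿ be a uniformly discrete set of finite local complexity and let φ : ℝⁿ → ℝⁿ be a differentiable function whose derivative map dφ is strongly P-equivariant. If φ satisfies Hypothesis (H) for P, then for every r > 0 there exists r' > 0 such that for all x, y ∈ ℝⁿ: B_{r'}[P − x] = B_{r'}[P − y] implies B_r[φ(P) − φ(x)] = B_r[φ(P) − φ(y)]. -/

import Mathlib

open Metric Set

noncomputable section

/-- Euclidean space ℝⁿ. -/
abbrev Euc (n : ℕ) := EuclideanSpace ℝ (Fin n)

/-- The translate `P - x = {p - x : p ∈ P}`. -/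
def shiftSet {n : ℕ} (P : Set (Euc n)) (x : Euc n) : Set (Euc n) :=
  (fun p => p - x) '' P

/-- The `r`-patch of `P` around `x`: `B_r[P - x] = B(0,r) ∩ (P - x)`. -/
def patch {n : ℕ} (P : Set (Euc n)) (r : ℝ) (x : Euc n) : Set (Euc n) :=
  ball (0 : Euc n) r ∩ shiftSet P x

/-- `P` is uniformly discrete: there is a positive minimal distance between points. -/
def UnifDiscrete {n : ℕ} (P : Set (Euc n)) : Prop :=
  ∃ δ > 0, ∀ p ∈ P, ∀ q ∈ P, p ≠ q → δ ≤ ‖p - q‖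

/-- `P` is relatively dense: every ball of radius `R` contains a point of `P`. -/
def RelDense {n : ℕ} (P : Set (Euc n)) : Prop :=
  ∃ R > 0, ∀ x : Euc n, ∃ p ∈ P, ‖p - x‖ < R

/-- `P` has finite local complexity: for each `r > 0`, only finitely many `r`-patches
around points of `P`. -/
def FLC {n : ℕ} (P : Set (Euc n)) : Prop :=
  ∀ r > 0, {s : Set (Euc n) | ∃ x ∈ P, s = patch P r x}.Finite

/-- `f` is `P`-equivariant with range `R`. -/
def EquivRange {n : ℕ} {F : Type*} (P : Set (Euc n)) (R : ℝ) (f : Euc n → F) : Prop :=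
  ∀ x y : Euc n, patch P R x = patch P R y → f x = f y

/-- `f` is strongly `P`-equivariant: `P`-equivariant with some finite range `R > 0`. -/
def StrongEquiv {n : ℕ} {F : Type*} (P : Set (Euc n)) (f : Euc n → F) : Prop :=
  ∃ R > 0, EquivRange P R f

/-- `f`, viewed as a function on the subset `Q`, is `P`-equivariant with range `R`. -/
def EquivRangeOn {n : ℕ} {F : Type*} (P Q : Set (Euc n)) (R : ℝ) (f : Euc n → F) : Prop :=
  ∀ x ∈ Q, ∀ y ∈ Q, patch P R x = patch P R y → f x = f y

/-- `f`, viewed as a function on the subset `Q`, is strongly `P`-equivariant. -/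
def StrongEquivOn {n : ℕ} {F : Type*} (P Q : Set (Euc n)) (f : Euc n → F) : Prop :=
  ∃ R > 0, EquivRangeOn P Q R f

/-- `Q` is locally derivable from `P`. -/
def LocallyDerivable {n : ℕ} (P Q : Set (Euc n)) : Prop :=
  ∃ R > 0, ∀ x y : Euc n, patch P R x = patch P R y →
    ({0} : Set (Euc n)) ∩ shiftSet Q x = ({0} : Set (Euc n)) ∩ shiftSet Q y

/-- Hypothesis (H): for every `r > 0` there is `r' > 0` such that for all `x`,
`B(φ(x), r) ∩ φ(P) ⊆ φ(B(x, r') ∩ P)`. -/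
def HypoH {n : ℕ} (P : Set (Euc n)) (φ : Euc n → Euc n) : Prop :=
  ∀ r > 0, ∃ r' > 0, ∀ x : Euc n, ball (φ x) r ∩ (φ '' P) ⊆ φ '' (ball x r' ∩ P)

/-- The pattern metric `D` on closed subsets of ℝⁿ. -/
def patternDist {n : ℕ} (A B : Set (Euc n)) : ℝ :=
  sInf {ε : ℝ | 0 < ε ∧ Metric.hausdorffDist
    ((ball (0 : Euc n) (1 / ε) ∩ A) ∪ sphere (0 : Euc n) (1 / ε))
    ((ball (0 : Euc n) (1 / ε) ∩ B) ∪ sphere (0 : Euc n) (1 / ε)) ≤ ε}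

/-- A continuous `f : ℝⁿ → ℝⁿ` is weakly `P`-equivariant if it is uniformly approximated
by strongly `P`-equivariant continuous functions. -/
def WeakEquiv {n : ℕ} (P : Set (Euc n)) (f : Euc n → Euc n) : Prop :=
  ∀ ε > 0, ∃ g : Euc n → Euc n, Continuous g ∧ StrongEquiv P g ∧ ∀ x : Euc n, ‖f x - g x‖ < ε

/-- `P` is aperiodic: the only translation fixing `P` is `0`. -/
def IsAperiodicSet {n : ℕ} (P : Set (Euc n)) : Prop :=
  ∀ x : Euc n, shiftSet P x = P → x = 0


lemma mem_patch_iff {n : ℕ} {P : Set (Euc n)} {r : ℝ} {x h : Euc n} :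
    h ∈ patch P r x ↔ ‖h‖ < r ∧ x + h ∈ P := by
  simp only [patch, shiftSet, mem_inter_iff, mem_ball_zero_iff, mem_image]
  refine and_congr_right fun _ => ⟨?_, fun hp => ⟨x + h, hp, add_sub_cancel_left x h⟩⟩
  rintro ⟨p, hp, rfl⟩
  rwa [add_sub_cancel]

/-- Patches of radius `s + R` that agree at `x` and `y` force the `R`-patches at translates of
`x` and `y` by vectors shorter than `s` to agree. -/
lemma patch_add_eq_of_patch_eq {n : ℕ} {P : Set (Euc n)} {s R : ℝ} {x y h : Euc n}
    (hxy : patch P (s + R) x = patch P (s + R) y) (hh : ‖h‖ < s) :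
    patch P R (x + h) = patch P R (y + h) := by
  ext k
  simp only [mem_patch_iff, add_assoc]
  refine and_congr_right fun hk => ?_
  have hlt : ‖h + k‖ < s + R := (norm_add_le h k).trans_lt (add_lt_add hh hk)
  have hmem := Set.ext_iff.mp hxy (h + k)
  simpa only [mem_patch_iff, hlt, true_and] using hmem

/-- If the derivative of `φ` is `P`-equivariant with range `R`, then increments of `φ` shorter
than `s` are determined by patches of radius `s + R`. -/
lemma sub_eq_sub_of_patch_eq {n : ℕ} {F : Type*} [NormedAddCommGroup F] [NormedSpace ℝ F]
    {P : Set (Euc n)} {s R : ℝ} {φ : Euc n → F}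
    (hφ : Differentiable ℝ φ) (hR : EquivRange P R (fderiv ℝ φ)) {x y h : Euc n}
    (hxy : patch P (s + R) x = patch P (s + R) y) (hh : ‖h‖ < s) :
    φ (x + h) - φ x = φ (y + h) - φ y := by
  have hd : ∀ a, Differentiable ℝ fun k => φ (a + k) := fun a =>
    hφ.comp (differentiable_id.const_add a)
  have hconst : φ (x + h) - φ (y + h) = φ (x + 0) - φ (y + 0) := by
    refine (convex_ball (0 : Euc n) s).is_const_of_fderivWithin_eq_zero (𝕜 := ℝ)
      (f := fun k => φ (x + k) - φ (y + k)) ((hd x).sub (hd y)).differentiableOn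
      (fun k hk => ?_) (mem_ball_zero_iff.mpr hh)
      (mem_ball_self ((norm_nonneg h).trans_lt hh))
    rw [fderivWithin_of_isOpen isOpen_ball hk, fderiv_fun_sub (hd x k) (hd y k),
      fderiv_comp_add_left, fderiv_comp_add_left,
      hR _ _ (patch_add_eq_of_patch_eq hxy (mem_ball_zero_iff.mp hk)), sub_self]
  rw [add_zero, add_zero] at hconst
  rwa [sub_eq_sub_iff_sub_eq_sub]

lemma patch_image_subset {n : ℕ} {P : Set (Euc n)} {r s R : ℝ} {φ : Euc n → Euc n}
    (hφ : Differentiable ℝ φ) (hR₀ : 0 < R) (hR : EquivRange P R (fderiv ℝ φ))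
    (hs : ∀ x, ball (φ x) r ∩ (φ '' P) ⊆ φ '' (ball x s ∩ P)) {x y : Euc n}
    (hxy : patch P (s + R) x = patch P (s + R) y) :
    patch (φ '' P) r (φ x) ⊆ patch (φ '' P) r (φ y) := by
  intro v hv
  obtain ⟨hvr, hv⟩ := mem_patch_iff.mp hv
  obtain ⟨q, ⟨hqx, hq⟩, hqv⟩ := hs x ⟨by simpa [mem_ball_iff_norm] using hvr, hv⟩
  have hh : ‖q - x‖ < s := mem_ball_iff_norm.mp hqx
  have hmem : q - x ∈ patch P (s + R) x := mem_patch_iff.mpr ⟨by linarith, by simpa using hq⟩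
  rw [hxy] at hmem
  refine mem_patch_iff.mpr ⟨hvr, y + (q - x), (mem_patch_iff.mp hmem).2, ?_⟩
  have hincr := sub_eq_sub_of_patch_eq hφ hR hxy hh
  rw [add_sub_cancel, hqv, add_sub_cancel_left] at hincr
  rw [hincr, add_sub_cancel]

theorem stmt7 {n : ℕ} (P : Set (Euc n)) (hUD : UnifDiscrete P) (hFLC : FLC P)
    (φ : Euc n → Euc n) (hφ : Differentiable ℝ φ)
    (hdφ : StrongEquiv P (fderiv ℝ φ)) (hH : HypoH P φ) :
    ∀ r > 0, ∃ r' > 0, ∀ x y : Euc n, patch P r' x = patch P r' y →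
      patch (φ '' P) r (φ x) = patch (φ '' P) r (φ y) := by
  obtain ⟨R, hR₀, hR⟩ := hdφ
  intro r hr
  obtain ⟨s, hs₀, hs⟩ := hH r hr
  exact ⟨s + R, add_pos hs₀ hR₀, fun x y hxy => Subset.antisymm
    (patch_image_subset hφ hR₀ hR hs hxy) (patch_image_subset hφ hR₀ hR hs hxy.symm)⟩
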